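/- Let {φ_e}_{e∈E} be a conformal iterated function system in ℝⁿ with finite alphabet E and limit set J, and assume dist(∂X, J) > 0, where ∂X is the topological boundary of X in ℝⁿ. Then J is v-directed porous for every unit vector v ∈ S^{n-1}. -/

import Mathlib

/-! The proof separates the first-level pieces of `J` and transports that separation to all
scales by bounded distortion.

* Covering (`ball_subset_image_of_conformal`): a map with conformal derivatives of ratio at least
  `l` on a closed ball of radius `ρ` covers the ball of radius `l * ρ` about the image of the
  centre. This is a minimisation argument and needs neither injectivity nor continuity of the
  derivative.
* Since `J` is at distance at least `R` from `∂X`, each closed ball of radius `R / 2` centred on `J`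
  lies in the interior of `X`. With the covering property and the Open Set Condition, the finitely
  many sets `φ_a(J)` are at mutual distance at least some `δ > 0`. Transported by `φ_κ`, points of
  `J` whose codes first differ after the common prefix `κ` are at distance at least
  `c * ‖Dφ_κ‖` (`CIFS.le_dist_compWord`).
* As `X` is compact and connected, `diam φ_ω(X) ≤ C * ‖Dφ_ω‖` (`CIFS.exists_dist_compWord_le`).

Given `x = π(ω)` and `r > 0`, let `m` be the first index with `‖Dφ_{ω|m}‖ ≤ r / (4 C)`. The part
`A` of `J` in the cylinder of `ω|m` lies in the closed ball of radius `r / 4` about `x`, while the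
rest of `J` has distance at least a fixed multiple of `r` from `A`, because all shorter prefixes of
`ω` have ratio greater than `r / (4 C)`. On the segment `x + [0, r/2] v` the distance to `A` grows
from `0` to at least `r / 4`, so by continuity it takes a prescribed value `h * r`; the ball of
radius `h * r` about the point where it does so misses both `A` and the rest of `J`. -/

open Metric Set Filter

/-- `por A x r` is the porosity of the set `A` at the point `x` at scale `r`:
the supremum of all `c ≥ 0` such that some open ball of radius `c·r` is contained
in `B(x,r) ∖ A`. -/
noncomputable def por {X : Type*} [MetricSpace X] (A : Set X) (x : X) (r : ℝ) : ℝ :=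
  sSup {c : ℝ | 0 ≤ c ∧ ∃ y : X, Metric.ball y (c * r) ⊆ Metric.ball x r \ A}

/-- `A` is porous at the point `x`. -/
def PorousAt {X : Type*} [MetricSpace X] (A : Set X) (x : X) : Prop :=
  ∃ c ∈ Set.Ioo (0 : ℝ) 1, ∃ r₀ > (0 : ℝ), ∀ r ∈ Set.Ioo (0 : ℝ) r₀, c ≤ por A x r

/-- `A` is porous. -/
def Porous {X : Type*} [MetricSpace X] (A : Set X) : Prop :=
  ∃ c ∈ Set.Ioo (0 : ℝ) 1, ∃ r₀ > (0 : ℝ), ∀ x ∈ A, ∀ r ∈ Set.Ioo (0 : ℝ) r₀, c ≤ por A x r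

/-- Directed porosity of `A` at `x` at scale `r` in direction `v`: the supremum of all
`c ≥ 0` such that some open ball of radius `c·r` centered on the line `x + ℝ·v` is
contained in `B(x,r) ∖ A`. -/
noncomputable def porDir {V : Type*} [NormedAddCommGroup V] [NormedSpace ℝ V]
    (v : V) (A : Set V) (x : V) (r : ℝ) : ℝ :=
  sSup {c : ℝ | 0 ≤ c ∧ ∃ t : ℝ,
    Metric.ball (x + t • v) (c * r) ⊆ Metric.ball x r \ A}

/-- `A` is `v`-directed porous. -/
def DirectedPorous {V : Type*} [NormedAddCommGroup V] [NormedSpace ℝ V]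
    (v : V) (A : Set V) : Prop :=
  ∃ c ∈ Set.Ioo (0 : ℝ) 1, ∃ r₀ > (0 : ℝ), ∀ x ∈ A, ∀ r ∈ Set.Ioo (0 : ℝ) r₀,
    c ≤ porDir v A x r

/-- A conformal iterated function system in `ℝⁿ` (single-vertex conformal GDMS):
a compact connected set `X` equal to the closure of its interior, an open connected
set `W ⊇ X`, and injective `C¹` maps `φ e : W → W` with conformal (invertibly similar)
derivatives `D e`, mapping `X` into `X`, with Lipschitz constant at most `s ∈ (0,1)`
on `W`, satisfying the Open Set Condition. -/
structure CIFS (n : ℕ) (E : Type*) where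
  X : Set (EuclideanSpace ℝ (Fin n))
  W : Set (EuclideanSpace ℝ (Fin n))
  φ : E → EuclideanSpace ℝ (Fin n) → EuclideanSpace ℝ (Fin n)
  D : E → EuclideanSpace ℝ (Fin n) → EuclideanSpace ℝ (Fin n) →L[ℝ] EuclideanSpace ℝ (Fin n)
  s : ℝ
  hs : s ∈ Set.Ioo (0 : ℝ) 1
  hXcompact : IsCompact X
  hXconn : IsConnected X
  hXreg : X = closure (interior X)
  hWopen : IsOpen W
  hWconn : IsConnected W
  hXW : X ⊆ W
  hInj : ∀ e, Set.InjOn (φ e) W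
  hMapsW : ∀ e, Set.MapsTo (φ e) W W
  hMapsX : ∀ e, Set.MapsTo (φ e) X X
  hDeriv : ∀ e, ∀ x ∈ W, HasFDerivAt (φ e) (D e x) x
  hConf : ∀ e, ∀ x ∈ W, IsConformalMap (D e x)
  hLip : ∀ e, LipschitzOnWith s.toNNReal (φ e) W
  hOSC : ∀ a b : E, a ≠ b → Disjoint (φ a '' interior X) (φ b '' interior X)

namespace CIFS

variable {n : ℕ} {E : Type*}

/-- The composition `φ_ω = φ_{ω₁} ∘ ⋯ ∘ φ_{ωₙ}` associated to a finite word `ω`. -/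
def compWord (S : CIFS n E) (ω : List E) :
    EuclideanSpace ℝ (Fin n) → EuclideanSpace ℝ (Fin n) :=
  ω.foldr (fun e g => S.φ e ∘ g) id

/-- The derivative of `φ_ω` at a point, computed by the chain rule. -/
noncomputable def derivWord (S : CIFS n E) :
    List E → EuclideanSpace ℝ (Fin n) →
      (EuclideanSpace ℝ (Fin n) →L[ℝ] EuclideanSpace ℝ (Fin n))
  | [], _ => ContinuousLinearMap.id ℝ _
  | e :: ω, x => (S.D e (S.compWord ω x)).comp (S.derivWord ω x)

/-- The Bounded Distortion Property: there is `K ≥ 1` such that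
`‖Dφ_ω(p)‖ ≤ K·‖Dφ_ω(q)‖` for every nonempty word `ω` and all `p, q ∈ W`. -/
def BDP (S : CIFS n E) : Prop :=
  ∃ K : ℝ, 1 ≤ K ∧ ∀ ω : List E, ω ≠ [] → ∀ p ∈ S.W, ∀ q ∈ S.W,
    ‖S.derivWord ω p‖ ≤ K * ‖S.derivWord ω q‖

end CIFS

/-! ### Conformal maps and the covering property -/

/-- A conformal map scales every vector by its operator norm; this is the lower bound. -/
lemma IsConformalMap.norm_mul_le {n : ℕ}
    {L : EuclideanSpace ℝ (Fin n) →L[ℝ] EuclideanSpace ℝ (Fin n)} (h : IsConformalMap L)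
    (u : EuclideanSpace ℝ (Fin n)) : ‖L‖ * ‖u‖ ≤ ‖L u‖ := by
  obtain ⟨c, hc, li, rfl⟩ := h
  have h1 : ∀ w, ‖(c • li.toContinuousLinearMap) w‖ = |c| * ‖w‖ := by
    intro w
    simp [norm_smul]
  rw [h1]
  have : ‖c • li.toContinuousLinearMap‖ ≤ |c| :=
    ContinuousLinearMap.opNorm_le_bound _ (abs_nonneg c) fun w => (h1 w).le
  gcongr

lemma IsConformalMap.surjective_of_euclidean {n : ℕ}
    {L : EuclideanSpace ℝ (Fin n) →L[ℝ] EuclideanSpace ℝ (Fin n)} (h : IsConformalMap L) :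
    Function.Surjective L :=
  (LinearMap.injective_iff_surjective (f := (L : _ →ₗ[ℝ] EuclideanSpace ℝ (Fin n)))).1 h.injective

/-- Quantitative openness from pointwise conformal derivatives: a minimiser of
`x ↦ ‖f x - y‖ + μ * ‖x - p‖` over the closed ball must solve `f x = y`, since otherwise moving in
the direction `u` with `D x u = y - f x` decreases the functional. -/
lemma ball_subset_image_of_conformal {n : ℕ}
    {f : EuclideanSpace ℝ (Fin n) → EuclideanSpace ℝ (Fin n)}
    {D : EuclideanSpace ℝ (Fin n) → EuclideanSpace ℝ (Fin n) →L[ℝ] EuclideanSpace ℝ (Fin n)}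
    {p : EuclideanSpace ℝ (Fin n)} {ρ l : ℝ} (hρ : 0 < ρ)
    (hD : ∀ x ∈ closedBall p ρ, HasFDerivAt f (D x) x)
    (hC : ∀ x ∈ closedBall p ρ, IsConformalMap (D x))
    (hb : ∀ x ∈ closedBall p ρ, l ≤ ‖D x‖) :
    ball (f p) (l * ρ) ⊆ f '' ball p ρ := by
  intro y hy
  rw [mem_ball, dist_comm, dist_eq_norm] at hy
  obtain ⟨μ, hμ1, hμ2⟩ : ∃ μ, ‖f p - y‖ / ρ < μ ∧ μ < l :=
    exists_between ((div_lt_iff₀ hρ).2 hy)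
  have hμ0 : 0 ≤ μ := le_trans (by positivity) hμ1.le
  have hμ3 : ‖f p - y‖ < μ * ρ := (div_lt_iff₀ hρ).1 hμ1
  have hcont : ContinuousOn (fun x => ‖f x - y‖ + μ * ‖x - p‖) (closedBall p ρ) := by
    have hf : ContinuousOn f (closedBall p ρ) :=
      fun x hx => (hD x hx).continuousAt.continuousWithinAt
    fun_prop
  obtain ⟨x, hx, hmin⟩ := (isCompact_closedBall p ρ).exists_isMinOn
    ⟨p, mem_closedBall_self hρ.le⟩ hcont
  have hxp : ‖f x - y‖ + μ * ‖x - p‖ ≤ ‖f p - y‖ := by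
    simpa using hmin (mem_closedBall_self hρ.le)
  have hxb : x ∈ ball p ρ := by
    rw [mem_ball, dist_eq_norm]
    by_contra! hcon
    have : μ * ρ ≤ μ * ‖x - p‖ := by gcongr
    linarith [norm_nonneg (f x - y)]
  refine ⟨x, hxb, ?_⟩
  by_contra hne
  have hw : 0 < ‖f x - y‖ := norm_pos_iff.2 (sub_ne_zero.2 hne)
  obtain ⟨u, hu⟩ := (hC x hx).surjective_of_euclidean (-(f x - y))
  have hul : l * ‖u‖ ≤ ‖f x - y‖ := by
    have h1 := (hC x hx).norm_mul_le u
    rw [hu, norm_neg] at h1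
    have := mul_le_mul_of_nonneg_right (hb x hx) (norm_nonneg u)
    linarith
  have hμu : μ * ‖u‖ < ‖f x - y‖ := by
    rcases (norm_nonneg u).eq_or_lt with h0 | h0
    · rw [← h0, mul_zero]
      exact hw
    · exact lt_of_lt_of_le (mul_lt_mul_of_pos_right hμ2 h0) hul
  -- half of the first-order gain along `u` is left to absorb the remainder of the derivative
  set ε := (‖f x - y‖ - μ * ‖u‖) / 2 with hε
  have hε0 : 0 < ε := by rw [hε]; linarith
  have hline : HasDerivAt (fun t : ℝ => x + t • u) u 0 := by
    simpa using ((hasDerivAt_id (0 : ℝ)).smul_const u).const_add x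
  have hder : HasDerivAt (fun t : ℝ => f (x + t • u)) (-(f x - y)) 0 := by
    have := HasFDerivAt.comp_hasDerivAt_of_eq (0 : ℝ) (hD x hx) hline (by simp)
    rw [hu] at this
    exact this
  have ho := (hasDerivAt_iff_isLittleO.1 hder).bound hε0
  have hball : ∀ᶠ t : ℝ in nhds 0, x + t • u ∈ ball p ρ := by
    apply hline.continuousAt.eventually
    exact isOpen_ball.mem_nhds (by simpa using hxb)
  have hpos : ∀ᶠ t : ℝ in nhdsWithin 0 (Ioi 0), t ∈ Ioo (0 : ℝ) 1 := Ioo_mem_nhdsGT one_pos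
  obtain ⟨t, ht1, ht2, ht0, ht3⟩ :=
    ((ho.filter_mono nhdsWithin_le_nhds).and
      ((hball.filter_mono nhdsWithin_le_nhds).and hpos)).exists
  have hge : ‖f x - y‖ + μ * ‖x - p‖ ≤ ‖f (x + t • u) - y‖ + μ * ‖x + t • u - p‖ :=
    hmin (ball_subset_closedBall ht2)
  simp only [zero_smul, add_zero, sub_zero, Real.norm_eq_abs, abs_of_pos ht0] at ht1
  have e1 : f (x + t • u) - y =
      (f (x + t • u) - f x - t • (-(f x - y))) + (1 - t) • (f x - y) := by
    module
  have b1 : ‖f (x + t • u) - y‖ ≤ ε * t + (1 - t) * ‖f x - y‖ := by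
    rw [e1]
    refine (norm_add_le _ _).trans (add_le_add ht1 ?_)
    rw [norm_smul, Real.norm_eq_abs, abs_of_pos (by linarith)]
  have b2 : ‖x + t • u - p‖ ≤ ‖x - p‖ + t * ‖u‖ := by
    have : x + t • u - p = (x - p) + t • u := by abel
    rw [this]
    refine (norm_add_le _ _).trans ?_
    rw [norm_smul, Real.norm_eq_abs, abs_of_pos ht0]
  have b3 := mul_le_mul_of_nonneg_left b2 hμ0
  have : t * (‖f x - y‖ - μ * ‖u‖) ≤ ε * t := by linarith
  have h2 : ‖f x - y‖ - μ * ‖u‖ = 2 * ε := by rw [hε]; ring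
  rw [h2] at this
  nlinarith [mul_pos ht0 hε0]

namespace CIFS

variable {n : ℕ} {E : Type*}

/-! ### Finite words: derivatives, contraction, distortion -/

lemma compWord_cons (S : CIFS n E) (e : E) (ω : List E) (x : EuclideanSpace ℝ (Fin n)) :
    S.compWord (e :: ω) x = S.φ e (S.compWord ω x) := rfl

lemma mapsTo_compWord_W (S : CIFS n E) (ω : List E) : MapsTo (S.compWord ω) S.W S.W := by
  induction ω with
  | nil => exact mapsTo_id _
  | cons e ω ih => exact (S.hMapsW e).comp ih

lemma mapsTo_compWord_X (S : CIFS n E) (ω : List E) : MapsTo (S.compWord ω) S.X S.X := by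
  induction ω with
  | nil => exact mapsTo_id _
  | cons e ω ih => exact (S.hMapsX e).comp ih

lemma injOn_compWord (S : CIFS n E) (ω : List E) : InjOn (S.compWord ω) S.W := by
  induction ω with
  | nil => exact injOn_id _
  | cons e ω ih => exact (S.hInj e).comp ih (S.mapsTo_compWord_W ω)

lemma hasFDerivAt_compWord (S : CIFS n E) (ω : List E) {x : EuclideanSpace ℝ (Fin n)}
    (hx : x ∈ S.W) : HasFDerivAt (S.compWord ω) (S.derivWord ω x) x := by
  induction ω with
  | nil => exact hasFDerivAt_id x
  | cons e ω ih => exact (S.hDeriv e _ (S.mapsTo_compWord_W ω hx)).comp x ih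

lemma isConformalMap_derivWord (S : CIFS n E) (ω : List E) {x : EuclideanSpace ℝ (Fin n)}
    (hx : x ∈ S.W) : IsConformalMap (S.derivWord ω x) := by
  induction ω with
  | nil => exact isConformalMap_id
  | cons e ω ih => exact (S.hConf e _ (S.mapsTo_compWord_W ω hx)).comp ih

lemma norm_derivWord_le (S : CIFS n E) (ω : List E) {x : EuclideanSpace ℝ (Fin n)}
    (hx : x ∈ S.W) : ‖S.derivWord ω x‖ ≤ S.s ^ ω.length := by
  induction ω with
  | nil =>
    rw [List.length_nil, pow_zero]
    exact ContinuousLinearMap.norm_id_le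
  | cons e ω ih =>
    have hy := S.mapsTo_compWord_W ω hx
    have h1 : ‖S.D e (S.compWord ω x)‖ ≤ S.s := by
      have := (S.hDeriv e _ hy).le_of_lipschitzOn (S.hWopen.mem_nhds hy) (S.hLip e)
      rwa [Real.coe_toNNReal _ S.hs.1.le] at this
    rw [List.length_cons, pow_succ']
    exact (ContinuousLinearMap.opNorm_comp_le _ _).trans
      (mul_le_mul h1 ih (norm_nonneg _) S.hs.1.le)

lemma dist_compWord_le_pow (S : CIFS n E) (ω : List E) {p q : EuclideanSpace ℝ (Fin n)}
    (hp : p ∈ S.W) (hq : q ∈ S.W) :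
    dist (S.compWord ω p) (S.compWord ω q) ≤ S.s ^ ω.length * dist p q := by
  induction ω with
  | nil => simp [compWord]
  | cons e ω ih =>
    have h1 := (S.hLip e).dist_le_mul _ (S.mapsTo_compWord_W ω hp) _ (S.mapsTo_compWord_W ω hq)
    rw [Real.coe_toNNReal _ S.hs.1.le] at h1
    rw [compWord_cons, compWord_cons, List.length_cons, pow_succ', mul_assoc]
    exact h1.trans (mul_le_mul_of_nonneg_left ih S.hs.1.le)

/-- `diam φ_ω(X)` is at most a constant times the similarity ratio of `φ_ω` at a base point. On
balls inside `W` this is the mean value inequality with bounded distortion; connectedness of `X`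
lets one chain such balls, and compactness makes the constant uniform. -/
lemma exists_dist_compWord_le (S : CIFS n E) {K : ℝ} {p₀ : EuclideanSpace ℝ (Fin n)}
    (hp₀ : p₀ ∈ S.X)
    (hK : ∀ ω : List E, ∀ p ∈ S.W, ∀ q ∈ S.W, ‖S.derivWord ω p‖ ≤ K * ‖S.derivWord ω q‖) :
    ∃ C > (0 : ℝ), ∀ ω : List E, ∀ p ∈ S.X, ∀ q ∈ S.X,
      dist (S.compWord ω p) (S.compWord ω q) ≤ C * ‖S.derivWord ω p₀‖ := by
  have hloc : ∀ x ∈ S.X, ∃ C, ∀ᶠ y in nhdsWithin x S.X, ∀ ω : List E,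
      dist (S.compWord ω x) (S.compWord ω y) ≤ C * ‖S.derivWord ω p₀‖ := by
    intro x hx
    obtain ⟨ε, hε, hball⟩ := Metric.isOpen_iff.1 S.hWopen x (S.hXW hx)
    refine ⟨|K| * ε, ?_⟩
    filter_upwards [nhdsWithin_le_nhds (ball_mem_nhds x hε)] with y hy ω
    have h1 := (convex_ball x ε).norm_image_sub_le_of_norm_hasFDerivWithin_le
      (f := S.compWord ω) (f' := S.derivWord ω) (C := |K| * ‖S.derivWord ω p₀‖)
      (fun z hz => (S.hasFDerivAt_compWord ω (hball hz)).hasFDerivWithinAt)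
      (fun z hz => (hK ω z (hball hz) p₀ (S.hXW hp₀)).trans
        (mul_le_mul_of_nonneg_right (le_abs_self K) (norm_nonneg _)))
      hy (mem_ball_self hε)
    rw [← dist_eq_norm, ← dist_eq_norm, dist_comm x y] at h1
    have h2 : dist y x ≤ ε := (mem_ball.1 hy).le
    calc dist (S.compWord ω x) (S.compWord ω y)
        ≤ |K| * ‖S.derivWord ω p₀‖ * dist y x := h1
      _ ≤ |K| * ‖S.derivWord ω p₀‖ * ε := by gcongr
      _ = |K| * ε * ‖S.derivWord ω p₀‖ := by ring
  have hpt : ∀ x ∈ S.X, ∃ C, ∀ ω : List E,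
      dist (S.compWord ω p₀) (S.compWord ω x) ≤ C * ‖S.derivWord ω p₀‖ := by
    intro x hx
    refine S.hXconn.isPreconnected.induction₂ (fun a b => ∃ C, ∀ ω : List E,
      dist (S.compWord ω a) (S.compWord ω b) ≤ C * ‖S.derivWord ω p₀‖) ?_ ?_ ?_ hp₀ hx
    · intro a ha
      obtain ⟨C, hC⟩ := hloc a ha
      filter_upwards [hC] with b hb using ⟨C, hb⟩
    · rintro a b c - - - ⟨C, hC⟩ ⟨C', hC'⟩
      refine ⟨C + C', fun ω => ?_⟩
      rw [add_mul]
      exact (dist_triangle _ _ _).trans (add_le_add (hC ω) (hC' ω))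
    · rintro a b - - ⟨C, hC⟩
      exact ⟨C, fun ω => by rw [dist_comm]; exact hC ω⟩
  have hunif : ∃ C, ∀ x ∈ S.X, ∀ ω : List E,
      dist (S.compWord ω p₀) (S.compWord ω x) ≤ C * ‖S.derivWord ω p₀‖ := by
    refine S.hXcompact.induction_on (p := fun s => ∃ C, ∀ x ∈ s, ∀ ω : List E,
      dist (S.compWord ω p₀) (S.compWord ω x) ≤ C * ‖S.derivWord ω p₀‖) ⟨0, by simp⟩ ?_ ?_ ?_
    · rintro s t hst ⟨C, hC⟩
      exact ⟨C, fun x hx => hC x (hst hx)⟩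
    · rintro s t ⟨C, hC⟩ ⟨C', hC'⟩
      refine ⟨max C C', ?_⟩
      rintro x (hx | hx) ω
      · exact (hC x hx ω).trans (mul_le_mul_of_nonneg_right (le_max_left _ _) (norm_nonneg _))
      · exact (hC' x hx ω).trans (mul_le_mul_of_nonneg_right (le_max_right _ _) (norm_nonneg _))
    · intro x hx
      obtain ⟨C, hC⟩ := hpt x hx
      obtain ⟨C', hC'⟩ := hloc x hx
      refine ⟨_, hC', C + C', fun y hy ω => ?_⟩
      rw [add_mul]
      exact (dist_triangle _ _ _).trans (add_le_add (hC ω) (hy ω))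
  obtain ⟨C, hC⟩ := hunif
  refine ⟨2 * |C| + 1, by positivity, fun ω p hp q hq => ?_⟩
  have h1 := hC p hp ω
  have h2 := hC q hq ω
  have h3 := mul_le_mul_of_nonneg_right (le_abs_self C) (norm_nonneg (S.derivWord ω p₀))
  have h4 := dist_triangle_left (S.compWord ω p) (S.compWord ω q) (S.compWord ω p₀)
  nlinarith [norm_nonneg (S.derivWord ω p₀)]

lemma ball_subset_image_compWord (S : CIFS n E) {K : ℝ} (hK1 : 1 ≤ K)
    {p₀ : EuclideanSpace ℝ (Fin n)} (hp₀ : p₀ ∈ S.W)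
    (hK : ∀ ω : List E, ∀ p ∈ S.W, ∀ q ∈ S.W, ‖S.derivWord ω p‖ ≤ K * ‖S.derivWord ω q‖)
    (ω : List E) {p : EuclideanSpace ℝ (Fin n)} {ρ : ℝ} (hρ : 0 < ρ)
    (hball : closedBall p ρ ⊆ S.W) :
    ball (S.compWord ω p) (‖S.derivWord ω p₀‖ / K * ρ) ⊆ S.compWord ω '' ball p ρ := by
  refine ball_subset_image_of_conformal (D := S.derivWord ω) hρ
    (fun x hx => S.hasFDerivAt_compWord ω (hball hx))
    (fun x hx => S.isConformalMap_derivWord ω (hball hx)) (fun x hx => ?_)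
  rw [div_le_iff₀' (by linarith)]
  exact hK ω p₀ hp₀ x (hball hx)

/-- Points at distance at least `ρ` are not brought together by `φ_ω` by more than the similarity
ratio, up to distortion: otherwise one image would lie in the image of the ball about the other
point, against injectivity. -/
lemma le_dist_compWord (S : CIFS n E) {K : ℝ} (hK1 : 1 ≤ K)
    {p₀ : EuclideanSpace ℝ (Fin n)} (hp₀ : p₀ ∈ S.W)
    (hK : ∀ ω : List E, ∀ p ∈ S.W, ∀ q ∈ S.W, ‖S.derivWord ω p‖ ≤ K * ‖S.derivWord ω q‖)
    (ω : List E) {p q : EuclideanSpace ℝ (Fin n)} {ρ : ℝ} (hρ : 0 < ρ)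
    (hball : closedBall p ρ ⊆ S.W) (hq : q ∈ S.W) (hpq : ρ ≤ dist p q) :
    ‖S.derivWord ω p₀‖ / K * ρ ≤ dist (S.compWord ω p) (S.compWord ω q) := by
  by_contra! hlt
  rw [dist_comm] at hlt
  obtain ⟨x, hx, hxq⟩ := S.ball_subset_image_compWord hK1 hp₀ hK ω hρ hball (mem_ball.2 hlt)
  have := S.injOn_compWord ω (hball (ball_subset_closedBall hx)) hq hxq
  rw [this, mem_ball, dist_comm] at hx
  linarith

/-! ### The coding map and the shift -/

/-- The coding map `π` is determined by the nested intersections, because `φ_ω(X)` shrinks to a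
point; hence it intertwines the shift with the maps of the system. -/
lemma coding_eq (S : CIFS n E) (π : (ℕ → E) → EuclideanSpace ℝ (Fin n))
    (hπ : ∀ ω : ℕ → E, ∀ m : ℕ,
      π ω ∈ S.compWord (List.ofFn fun i : Fin m => ω i) '' S.X) (ω : ℕ → E) :
    π ω = S.φ (ω 0) (π fun i => ω (i + 1)) := by
  have key : ∀ m : ℕ, dist (π ω) (S.φ (ω 0) (π fun i => ω (i + 1))) ≤
      S.s ^ (m + 1) * diam S.X := by
    intro m
    obtain ⟨a, ha, h1⟩ := hπ ω (m + 1)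
    obtain ⟨b, hb, h2⟩ := hπ (fun i => ω (i + 1)) m
    have h3 : S.φ (ω 0) (π fun i => ω (i + 1)) =
        S.compWord (List.ofFn fun i : Fin (m + 1) => ω i) b := by
      rw [List.ofFn_succ, compWord_cons, ← h2]
      rfl
    rw [← h1, h3]
    refine (S.dist_compWord_le_pow _ (S.hXW ha) (S.hXW hb)).trans ?_
    rw [List.length_ofFn]
    have := pow_nonneg S.hs.1.le (m + 1)
    gcongr
    exact dist_le_diam_of_mem S.hXcompact.isBounded ha hb
  have hlim : Tendsto (fun m : ℕ => S.s ^ (m + 1) * diam S.X) atTop (nhds 0) := by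
    have := ((tendsto_pow_atTop_nhds_zero_of_lt_one S.hs.1.le S.hs.2).comp
      (tendsto_add_atTop_nat 1)).mul_const (diam S.X)
    simpa using this
  exact dist_le_zero.1 (ge_of_tendsto' hlim key)

lemma coding_eq_compWord (S : CIFS n E) (π : (ℕ → E) → EuclideanSpace ℝ (Fin n))
    (hπ : ∀ ω : ℕ → E, ∀ m : ℕ,
      π ω ∈ S.compWord (List.ofFn fun i : Fin m => ω i) '' S.X) (m : ℕ) (ω : ℕ → E) :
    π ω = S.compWord (List.ofFn fun i : Fin m => ω i) (π fun i => ω (i + m)) := by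
  induction m generalizing ω with
  | zero => simp [compWord]
  | succ m ih =>
    rw [List.ofFn_succ, compWord_cons, S.coding_eq π hπ ω, ih (fun i => ω (i + 1))]
    simp only [Fin.val_zero, Fin.val_succ]
    congr 3

end CIFS

/-! ### Holes and directed porosity -/

/-- In a nontrivial direction the set defining `porDir` is bounded, so exhibiting one ball does
bound the supremum from below. -/
lemma le_porDir {V : Type*} [NormedAddCommGroup V] [NormedSpace ℝ V] {v : V} (hv : ‖v‖ = 1)
    {A : Set V} {x : V} {r : ℝ} (hr : 0 < r) {c : ℝ} (hc : 0 ≤ c) {t : ℝ}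
    (h : ball (x + t • v) (c * r) ⊆ ball x r \ A) : c ≤ porDir v A x r := by
  refine le_csSup ⟨1, ?_⟩ ⟨hc, t, h⟩
  rintro d ⟨-, t', h'⟩
  by_contra! hd
  have hdr : r < d * r := by nlinarith
  have h1 : x + t' • v + r • v ∈ ball x r :=
    (h' (by simpa [norm_smul, hv, abs_of_pos hr] using hdr)).1
  have h2 : x + t' • v - r • v ∈ ball x r :=
    (h' (by simpa [sub_eq_add_neg, norm_smul, hv, abs_of_pos hr] using hdr)).1
  have h3 : dist (x + t' • v + r • v) (x + t' • v - r • v) = 2 * r := by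
    rw [dist_eq_norm]
    have : x + t' • v + r • v - (x + t' • v - r • v) = (2 * r) • v := by module
    rw [this, norm_smul, hv, Real.norm_eq_abs, abs_of_pos (by linarith), mul_one]
  have h4 := dist_triangle_right (x + t' • v + r • v) (x + t' • v - r • v) x
  linarith [mem_ball.1 h1, mem_ball.1 h2]

/-- A ball about a point of `X` that misses the frontier of `X` lies in the interior of `X`. -/
lemma ball_subset_interior_of_frontier {n : ℕ} {X : Set (EuclideanSpace ℝ (Fin n))}
    (hX : IsClosed X) {y : EuclideanSpace ℝ (Fin n)} {R : ℝ} (hR : 0 < R) (hy : y ∈ X)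
    (h : ∀ x ∈ frontier X, R ≤ dist x y) : ball y R ⊆ interior X := by
  have hmem : ∀ z ∈ ball y R, z ∈ X → z ∈ interior X := by
    intro z hz hzX
    by_contra hzi
    have := h z (by rw [hX.frontier_eq]; exact ⟨hzX, hzi⟩)
    linarith [mem_ball.1 hz]
  refine IsPreconnected.subset_left_of_subset_union isOpen_interior hX.isOpen_compl
    (disjoint_compl_right.mono_left interior_subset) ?_
    ⟨y, mem_ball_self hR, hmem y (mem_ball_self hR) hy⟩ (convex_ball y R).isPreconnected
  intro z hz
  by_cases hzX : z ∈ X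
  · exact Or.inl (hmem z hz hzX)
  · exact Or.inr hzX

/-- If `A` is contained in the closed `r / 4`-ball about `x ∈ A` and the rest of `J` is at
distance at least `3 * h * r` from `A`, then there is a hole of radius `h * r` in direction `v`. -/
lemma exists_hole {V : Type*} [NormedAddCommGroup V] [NormedSpace ℝ V] {v : V} (hv : ‖v‖ = 1)
    {A J : Set V} {x : V} (hx : x ∈ A) {r h : ℝ} (hr : 0 < r) (hh : 0 < h) (hh4 : h ≤ 1 / 4)
    (hA : ∀ a ∈ A, dist x a ≤ r / 4)
    (hsep : ∀ a ∈ A, ∀ b ∈ J, b ∉ A → 3 * (h * r) ≤ dist a b) :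
    ∃ t : ℝ, ball (x + t • v) (h * r) ⊆ ball x r \ J := by
  have hhr : 0 < h * r := by positivity
  have hd : ∀ t : ℝ, 0 ≤ t → dist (x + t • v) x = t := by
    intro t ht
    rw [dist_eq_norm, add_sub_cancel_left, norm_smul, hv, mul_one, Real.norm_of_nonneg ht]
  have hcont : ContinuousOn (fun t : ℝ => infDist (x + t • v) A) (Icc 0 (r / 2)) :=
    ((continuous_infDist_pt A).comp (by fun_prop)).continuousOn
  have hend : r / 4 ≤ infDist (x + (r / 2) • v) A := by
    refine (le_infDist ⟨x, hx⟩).2 fun {a} ha => ?_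
    have := dist_triangle_right (x + (r / 2) • v) x a
    have := dist_triangle (x + (r / 2) • v) a x
    rw [hd _ (by positivity), dist_comm a x] at this
    linarith [hA a ha]
  obtain ⟨t, ⟨ht0, ht1⟩, ht⟩ := intermediate_value_Icc (by positivity) hcont
    (show h * r ∈ Icc _ _ by
      refine ⟨?_, ?_⟩
      · simpa [infDist_zero_of_mem hx] using hhr.le
      · refine le_trans ?_ hend
        nlinarith)
  dsimp only at ht
  refine ⟨t, fun z hz => ⟨?_, fun hzJ => ?_⟩⟩
  · have h1 := dist_triangle z (x + t • v) x
    rw [hd t ht0] at h1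
    rw [mem_ball] at hz ⊢
    nlinarith
  · rw [mem_ball] at hz
    by_cases hzA : z ∈ A
    · have := infDist_le_dist_of_mem (x := x + t • v) hzA
      rw [ht, dist_comm] at this
      linarith
    · obtain ⟨a, ha, hlt⟩ := (infDist_lt_iff ⟨x, hx⟩).1
        (show infDist (x + t • v) A < 2 * (h * r) by rw [ht]; linarith)
      have h1 := hsep a ha z hzJ hzA
      have h2 := dist_triangle_left a z (x + t • v)
      rw [dist_comm (x + t • v) z] at h2
      linarith

/-- A finite CIFS whose limit set `J = range π` is at positive distance
from the boundary of `X` has `v`-directed porous limit set for every unit vector `v`. -/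
theorem stmt5 {n : ℕ} {E : Type*} [Finite E] [Nontrivial E]
    (S : CIFS n E) (hBDP : S.BDP)
    (π : (ℕ → E) → EuclideanSpace ℝ (Fin n))
    (hπ : ∀ ω : ℕ → E, ∀ m : ℕ,
      π ω ∈ S.compWord (List.ofFn fun i : Fin m => ω i) '' S.X)
    (hdist : ∃ R > (0 : ℝ), ∀ x ∈ frontier S.X, ∀ y ∈ Set.range π, R ≤ dist x y) :
    ∀ v : EuclideanSpace ℝ (Fin n), ‖v‖ = 1 → DirectedPorous v (Set.range π) := by
  intro v hv
  have hn : NeZero n := by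
    refine ⟨?_⟩
    rintro rfl
    rw [Subsingleton.elim v 0, norm_zero] at hv
    exact zero_ne_one hv
  obtain ⟨R, hR, hdist⟩ := hdist
  obtain ⟨K, hK1, hK'⟩ := hBDP
  have hK : ∀ ω : List E, ∀ p ∈ S.W, ∀ q ∈ S.W,
      ‖S.derivWord ω p‖ ≤ K * ‖S.derivWord ω q‖ := by
    intro ω p hp q hq
    by_cases hω : ω = []
    · subst hω
      exact le_mul_of_one_le_left (norm_nonneg _) hK1
    · exact hK' ω hω p hp q hq
  obtain ⟨p₀, hp₀⟩ := S.hXconn.nonempty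
  have hp₀W := S.hXW hp₀
  have hK0 : 0 < K := by linarith
  have hJX : ∀ ω, π ω ∈ S.X := by
    intro ω
    obtain ⟨a, ha, h⟩ := hπ ω 0
    rw [← h]
    exact S.mapsTo_compWord_X _ ha
  have hint : ∀ ω, closedBall (π ω) (R / 2) ⊆ interior S.X := fun ω =>
    (closedBall_subset_ball (by linarith)).trans
      (ball_subset_interior_of_frontier S.hXcompact.isClosed hR (hJX ω)
        fun x hx => hdist x hx _ ⟨ω, rfl⟩)
  have hintW : interior S.X ⊆ S.W := interior_subset.trans S.hXW
  obtain ⟨e₀, he₀⟩ := Finite.exists_min fun a : E => ‖S.derivWord [a] p₀‖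
  set l := ‖S.derivWord [e₀] p₀‖ with hl
  have hl0 : 0 < l := norm_pos_iff.2 (S.isConformalMap_derivWord _ hp₀W).ne_zero
  set δ := l / K * (R / 2) with hδ
  have hδ0 : 0 < δ := by positivity
  -- the first-level pieces `φ_a(J)` are uniformly separated
  have hgap : ∀ a b : E, a ≠ b → ∀ ω τ, δ ≤ dist (S.φ a (π ω)) (S.φ b (π τ)) := by
    intro a b hab ω τ
    by_contra! hlt
    rw [dist_comm] at hlt
    have hmem : S.φ b (π τ) ∈ ball (S.compWord [a] (π ω)) (‖S.derivWord [a] p₀‖ / K * (R / 2)) := by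
      refine lt_of_lt_of_le hlt ?_
      rw [hδ]
      have := he₀ a
      gcongr
    obtain ⟨x, hx, hxe⟩ := S.ball_subset_image_compWord hK1 hp₀W hK [a] (by positivity)
      ((hint ω).trans hintW) hmem
    exact (Set.disjoint_left.1 (S.hOSC a b hab))
      ⟨x, hint ω (ball_subset_closedBall hx), hxe⟩
      ⟨π τ, hint τ (mem_closedBall_self (by positivity)), rfl⟩
  set ρ := min δ (R / 2) with hρ
  have hρ0 : 0 < ρ := lt_min hδ0 (by positivity)
  obtain ⟨C, hC0, hC⟩ := S.exists_dist_compWord_le hp₀ hK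
  set ε := 1 / (4 * C) with hε
  have hε0 : 0 < ε := by positivity
  set h := min (1 / 4) (ε * ρ / (3 * K)) with hh
  have hh0 : 0 < h := lt_min (by norm_num) (by positivity)
  have hh4 : h ≤ 1 / 4 := min_le_left _ _
  refine ⟨h, ⟨hh0, by linarith⟩, 1, one_pos, ?_⟩
  rintro _ ⟨ω, rfl⟩ r ⟨hr0, -⟩
  have hex : ∃ m : ℕ, ‖S.derivWord (List.ofFn fun i : Fin m => ω i) p₀‖ ≤ ε * r := by
    obtain ⟨m, hm⟩ := exists_pow_lt_of_lt_one (show 0 < ε * r by positivity) S.hs.2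
    refine ⟨m, (S.norm_derivWord_le _ hp₀W).trans ?_⟩
    rw [List.length_ofFn]
    exact hm.le
  classical
  obtain ⟨m, hm, hmin⟩ : ∃ m : ℕ, ‖S.derivWord (List.ofFn fun i : Fin m => ω i) p₀‖ ≤ ε * r ∧
      ∀ k < m, ε * r < ‖S.derivWord (List.ofFn fun i : Fin k => ω i) p₀‖ :=
    ⟨Nat.find hex, Nat.find_spec hex, fun k hk => not_le.1 (Nat.find_min hex hk)⟩
  have hpre : ∀ k (τ : ℕ → E), (∀ i < k, τ i = ω i) →
      π τ = S.compWord (List.ofFn fun i : Fin k => ω i) (π fun i => τ (i + k)) := by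
    intro k τ hτ
    have : (fun i : Fin k => ω i) = fun i : Fin k => τ i := funext fun i => (hτ i i.2).symm
    rw [this]
    exact S.coding_eq_compWord π hπ k τ
  obtain ⟨t, ht⟩ := exists_hole hv (A := π '' {τ | ∀ i < m, τ i = ω i}) (J := range π)
    (x := π ω) ⟨ω, fun _ _ => rfl, rfl⟩ hr0 hh0 hh4 (by
      rintro _ ⟨τ, hτ, rfl⟩
      rw [hpre m τ hτ, hpre m ω fun _ _ => rfl]
      refine (hC _ _ (hJX _) _ (hJX _)).trans ?_
      calc C * ‖S.derivWord (List.ofFn fun i : Fin m => ω i) p₀‖ ≤ C * (ε * r) := by gcongr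
        _ = r / 4 := by rw [hε]; field_simp) (by
      rintro _ ⟨τ, hτ, rfl⟩ _ ⟨σ, rfl⟩ hσ
      have hσ' : ∃ k, k < m ∧ σ k ≠ ω k := by
        by_contra! hcon
        exact hσ ⟨σ, hcon, rfl⟩
      -- `k` is the length of the longest common prefix of `σ` and `τ`
      obtain ⟨k, ⟨hkm, hk⟩, hkmin⟩ : ∃ k, (k < m ∧ σ k ≠ ω k) ∧ ∀ i < k, σ i = ω i := by
        refine ⟨Nat.find hσ', Nat.find_spec hσ', fun i hi => ?_⟩
        by_contra hne
        exact Nat.find_min hσ' hi ⟨hi.trans (Nat.find_spec hσ').1, hne⟩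
      rw [hpre k τ fun i hi => hτ i (hi.trans hkm), hpre k σ hkmin]
      have hd : δ ≤ dist (π fun i => τ (i + k)) (π fun i => σ (i + k)) := by
        rw [S.coding_eq π hπ (fun i => τ (i + k)), S.coding_eq π hπ (fun i => σ (i + k))]
        refine hgap _ _ ?_ _ _
        simp only [zero_add]
        rw [hτ k hkm]
        exact hk.symm
      refine le_trans ?_ (S.le_dist_compWord hK1 hp₀W hK _ hρ0
        ((closedBall_subset_closedBall (min_le_right _ _)).trans ((hint _).trans hintW))
        (S.hXW (hJX _)) ((min_le_left _ _).trans hd))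
      calc 3 * (h * r) ≤ 3 * (ε * ρ / (3 * K) * r) := by
            have : h ≤ ε * ρ / (3 * K) := min_le_right _ _
            gcongr
        _ = ε * r / K * ρ := by field_simp
        _ ≤ _ := by
            have := (hmin k hkm).le
            gcongr)
  exact le_porDir hv hr0 hh0.le ht
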